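/- arXiv:2009.04827 — 3 statements merged into one kernel-verified Lean document; each statement's English description precedes it below -/
import Mathlib

section
/- For every n ≥ 3, the first 2n+1 bits of db(n) are 0^n 1 0^{n−2} 1 1; that is, db(n)[0..2n] = 0^n · 1 · 0^{n−2} · 1 · 1. -/
/-- `occ w x`: the number of indices `i` with `x[i..i+|w|-1] = w`,
i.e. the number of occurrences of `w` as a substring of `x`. -/
def occ (w x : List Bool) : ℕ :=
  ((List.range (x.length + 1 - w.length)).filter
    (fun i => decide ((x.drop i).take w.length = w))).length

/-- `occB w x`: the number of occurrences of `w` as a substring of `x`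
starting at a position divisible by `|w|` (aligned block occurrences). -/
def occB (w x : List Bool) : ℕ :=
  ((List.range (x.length + 1 - w.length)).filter
    (fun i => decide (i % w.length = 0) && decide ((x.drop i).take w.length = w))).length

/-- `x` is a de Bruijn string of order `n`: it has length `2^n` and every binary
string of length `n` occurs exactly once as a substring of `x ++ x[0..n-2]`. -/
def IsDeBruijn (n : ℕ) (x : List Bool) : Prop :=
  x.length = 2 ^ n ∧ ∀ w : List Bool, w.length = n → occ w (x ++ x.take (n - 1)) = 1

open Classical in
/-- `db n` is the lexicographically least de Bruijn string of order `n`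
(using the lexicographic order on `List Bool`, with `false < true`);
`[]` if none exists. -/
noncomputable def db (n : ℕ) : List Bool :=
  if h : ∃ x : List Bool, IsDeBruijn n x ∧ ∀ y, IsDeBruijn n y → x ≤ y then h.choose else []

/-- The block `B_{n,i} = db_i(n)^t`: `t` copies of the cyclic left shift of `db n` by `i`. -/
noncomputable def Bblk (n t i : ℕ) : List Bool := (List.replicate t ((db n).rotate i)).flatten

/-- The odd part `t` of `n = 2^s * t`. -/
def oddPart (n : ℕ) : ℕ := n / 2 ^ (n.factorization 2)

/-- `Sblk n` is the string `S_n = B_{n,0} B_{n,1} ⋯ B_{n,2^s-1}` where `n = 2^s * t`, `t` odd. -/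
noncomputable def Sblk (n : ℕ) : List Bool :=
  ((List.range (2 ^ (n.factorization 2))).map (fun i => Bblk n (oddPart n) i)).flatten

/-- `Sfin m = S_1 S_2 ⋯ S_m`. -/
noncomputable def Sfin (m : ℕ) : List Bool := ((List.range m).map (fun k => Sblk (k + 1))).flatten

/-- The infinite sequence `S = S_1 S_2 S_3 ⋯`, as a function giving its `i`-th bit. -/
noncomputable def Sseq (i : ℕ) : Bool := (Sfin (i + 1)).getD i false

/-- For odd `n`, `S_n = db(n)^n`. -/
noncomputable def Sodd (n : ℕ) : List Bool := (List.replicate n (db n)).flatten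

/-!
Seen in the de Bruijn graph, whose vertices are the words of length `n - 1` and whose edges are the
words of length `n`, a de Bruijn string is an Eulerian circuit. Start a trail with the word
`1^(n-1) 0^n 1 0^(n-2) 1 1` and prolong it greedily, using an edge labelled `1` only when the edge
labelled `0` out of the same vertex has been used; the starting word already obeys this rule. When
the trail gets stuck, comparing in- and out-degrees shows that it has returned to its initial vertex
`1^(n-1)`, and then that it has used every edge. So some de Bruijn string begins with
`0^n 1 0^(n-2) 1 1`. A de Bruijn string that is at most this one cannot deviate from the prefix:
it would have to carry a `0` in place of one of the three `1`s, and this always creates a second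
occurrence of some word of length `n`.
-/

section Windows

open Finset Function

variable {α : Type*} {k m n : ℕ} {f : ℕ → α} {c : α}

/-- The length-`n` window `f i, f (i + 1), …, f (i + n - 1)` of the sequence `f`. -/
def window (f : ℕ → α) (n i : ℕ) : Fin n → α := fun t => f (i + t)

lemma window_eq_window_iff {g : ℕ → α} {i j : ℕ} :
    window f n i = window g n j ↔ ∀ t < n, f (i + t) = g (j + t) :=
  funext_iff.trans Fin.forall_iff

lemma window_succ_eq_snoc (f : ℕ → α) (n i : ℕ) :
    window f (n + 1) i = Fin.snoc (window f n i) (f (i + n)) := by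
  refine (Fin.snoc_init_self (window f (n + 1) i)).symm.trans ?_
  simp only [Fin.init_def, window, Fin.val_castSucc, Fin.val_last]
  rfl

lemma window_succ_eq_cons (f : ℕ → α) (n i : ℕ) :
    window f (n + 1) i = Fin.cons (f i) (window f n (i + 1)) := by
  refine (Fin.cons_self_tail (window f (n + 1) i)).symm.trans (congrArg (Fin.cons _) ?_)
  exact funext fun t => congrArg f (Nat.add_right_comm i t 1)

lemma apply_mod_of_window_eq (hclosed : window f k m = window f k 0) {t : ℕ} (ht : t < m + k) :
    f (t % m) = f t := by
  induction t using Nat.strong_induction_on with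
  | h t ih =>
    rcases lt_or_ge t m with htm | htm
    · rw [Nat.mod_eq_of_lt htm]
    rcases m.eq_zero_or_pos with rfl | hm
    · rw [Nat.mod_zero]
    calc f (t % m) = f ((t - m) % m) := by rw [Nat.mod_eq_sub_mod htm]
      _ = f (t - m) := ih _ (by omega) (by omega)
      _ = f (0 + (t - m)) := by rw [Nat.zero_add]
      _ = f (m + (t - m)) := (window_eq_window_iff.mp hclosed _ (by omega)).symm
      _ = f t := by rw [Nat.add_sub_cancel' htm]

lemma window_mod_of_periodic {N : ℕ} (hf : Periodic f N) (n i : ℕ) :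
    window f n (i % N) = window f n i :=
  window_eq_window_iff.mpr fun t _ => by
    rw [← hf.map_mod_nat (i % N + t), Nat.mod_add_mod, hf.map_mod_nat]

lemma injOn_window_add {N : ℕ} (hf : Periodic f N)
    (hinj : Set.InjOn (window f n) (range N)) (s : ℕ) :
    Set.InjOn (window (fun t => f (t + s)) n) (range N) := by
  intro i hi j hj hij
  have hN : 0 < N := (Nat.zero_le i).trans_lt (mem_range.mp hi)
  have hshift : window f n ((i + s) % N) = window f n ((j + s) % N) := by
    rw [window_mod_of_periodic hf, window_mod_of_periodic hf]
    simpa only [window_eq_window_iff, Nat.add_right_comm] using hij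
  have hmod : i + s ≡ j + s [MOD N] :=
    hinj (mem_range.mpr (Nat.mod_lt _ hN)) (mem_range.mpr (Nat.mod_lt _ hN)) hshift
  exact (Nat.ModEq.add_right_cancel' s hmod).eq_of_lt_of_lt (mem_range.mp hi) (mem_range.mp hj)

lemma le_card_pow_of_injOn_window [Finite α] (hinj : Set.InjOn (window f n) (range m)) :
    m ≤ Nat.card α ^ n := by
  have := Fintype.ofFinite α
  simpa [Nat.card_eq_fintype_card] using card_le_card_of_injOn (t := univ) _ (by simp) hinj

lemma window_update_of_le {i : ℕ} (hi : i + n ≤ m) (b : α) :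
    window (update f m b) n i = window f n i :=
  window_eq_window_iff.mpr fun _ ht => update_of_ne (by omega) _ _

lemma window_succ_update (f : ℕ → α) (k m : ℕ) (b : α) :
    window (update f (m + k) b) (k + 1) m = Fin.snoc (window f k m) b := by
  rw [window_succ_eq_snoc, window_update_of_le le_rfl, update_self]

lemma eqOn_window_update (f : ℕ → α) (k m : ℕ) (b : α) :
    Set.EqOn (window (update f (m + k) b) (k + 1)) (window f (k + 1)) (range m) :=
  fun i hi => window_update_of_le (by have := mem_range.mp hi; omega) b

variable [DecidableEq α]

/-- The set of the first `m` windows of length `n` of `f`. -/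
def windows (f : ℕ → α) (n m : ℕ) : Finset (Fin n → α) := (range m).image (window f n)

lemma window_mem_windows {i : ℕ} (hi : i < m) : window f n i ∈ windows f n m :=
  mem_image_of_mem _ (mem_range.mpr hi)

section Degree

variable [Fintype α]

/-- The out-degree of the vertex `u` in the de Bruijn graph whose edges, the words of length
`k + 1`, are restricted to `W`; a word is an edge from its prefix to its suffix of length `k`. -/
def outDegree (W : Finset (Fin (k + 1) → α)) (u : Fin k → α) : ℕ := #{a | Fin.snoc u a ∈ W}

/-- The in-degree of the vertex `u` in the de Bruijn graph with edge set `W`. -/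
def inDegree (W : Finset (Fin (k + 1) → α)) (u : Fin k → α) : ℕ := #{a | Fin.cons a u ∈ W}

lemma outDegree_eq_card_iff {W : Finset (Fin (k + 1) → α)} {u : Fin k → α} :
    outDegree W u = Fintype.card α ↔ ∀ a, Fin.snoc u a ∈ W := by
  simp [outDegree, card_eq_iff_eq_univ, filter_eq_self]

lemma inDegree_eq_card_iff {W : Finset (Fin (k + 1) → α)} {u : Fin k → α} :
    inDegree W u = Fintype.card α ↔ ∀ a, Fin.cons a u ∈ W := by
  simp [inDegree, card_eq_iff_eq_univ, filter_eq_self]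

/-- The edge set `W` contains an edge labelled `c` out of a vertex only together with all the other
edges out of that vertex. -/
def IsLastChoice (c : α) (W : Finset (Fin (k + 1) → α)) : Prop :=
  ∀ u : Fin k → α, Fin.snoc u c ∈ W → ∀ a, Fin.snoc u a ∈ W

/- Saturation spreads backwards along the edges labelled `c`: if `v` is saturated, then by balance
every edge into `v` is used, among them the one labelled `c` if `v` ends in `c`, which is the last
choice out of its source. Every vertex reaches `c ⋯ c` along such edges. -/
lemma eq_univ_of_isLastChoice {W : Finset (Fin (k + 1) → α)} (hlast : IsLastChoice c W)
    (hbal : ∀ u, outDegree W u = inDegree W u) (hc : ∀ a, Fin.snoc (fun _ => c) a ∈ W) :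
    W = univ := by
  have saturated (u : Fin k → α) : ∀ a, Fin.snoc u a ∈ W := by
    let f : ℕ → α := fun t => if h : t < k then u ⟨t, h⟩ else c
    have f_eq_c {t : ℕ} (ht : k ≤ t) : f t = c := dif_neg ht.not_gt
    have step (i : ℕ) (h : ∀ a, Fin.snoc (window f k (i + 1)) a ∈ W) :
        ∀ a, Fin.snoc (window f k i) a ∈ W := by
      apply hlast
      rw [← f_eq_c (Nat.le_add_left k i), ← window_succ_eq_snoc, window_succ_eq_cons]
      exact inDegree_eq_card_iff.mp ((hbal _).symm.trans (outDegree_eq_card_iff.mpr h)) _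
    have base : ∀ a, Fin.snoc (window f k k) a ∈ W := by
      rwa [show window f k k = fun _ => c from funext fun t => f_eq_c (Nat.le_add_right k t)]
    have start : window f k 0 = u := funext fun t => by simp [window, f]
    exact start ▸ Nat.decreasingInduction (fun i _ => step i) base (Nat.zero_le k)
  refine eq_univ_of_forall fun w => ?_
  exact Fin.snoc_init_self w ▸ saturated (Fin.init w) _

lemma card_filter_window_eq_outDegree (hinj : Set.InjOn (window f (k + 1)) (range m))
    (u : Fin k → α) : #{i ∈ range m | window f k i = u} = outDegree (windows f (k + 1) m) u := by
  refine card_nbij (fun i => f (i + k)) ?_ ?_ ?_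
  · rintro i hi
    obtain ⟨him, rfl⟩ := mem_filter.mp hi
    simpa [← window_succ_eq_snoc] using window_mem_windows (mem_range.mp him)
  · intro i hi j hj hij
    obtain ⟨him, hiu⟩ := mem_filter.mp hi
    obtain ⟨hjm, hju⟩ := mem_filter.mp hj
    refine hinj him hjm ?_
    rw [window_succ_eq_snoc, window_succ_eq_snoc, hiu, hju]
    exact congrArg _ hij
  · intro a ha
    obtain ⟨i, him, hi⟩ := mem_image.mp (mem_filter.mp ha).2
    rw [window_succ_eq_snoc, Fin.snoc_inj] at hi
    exact ⟨i, mem_filter.mpr ⟨him, hi.1⟩, hi.2⟩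

lemma card_filter_window_succ_eq_inDegree (hinj : Set.InjOn (window f (k + 1)) (range m))
    (u : Fin k → α) :
    #{i ∈ range m | window f k (i + 1) = u} = inDegree (windows f (k + 1) m) u := by
  refine card_nbij f ?_ ?_ ?_
  · rintro i hi
    obtain ⟨him, rfl⟩ := mem_filter.mp hi
    simpa [← window_succ_eq_cons] using window_mem_windows (mem_range.mp him)
  · intro i hi j hj hij
    obtain ⟨him, hiu⟩ := mem_filter.mp hi
    obtain ⟨hjm, hju⟩ := mem_filter.mp hj
    exact hinj him hjm (by rw [window_succ_eq_cons, window_succ_eq_cons, hiu, hju, hij])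
  · intro a ha
    obtain ⟨i, him, hi⟩ := mem_image.mp (mem_filter.mp ha).2
    rw [window_succ_eq_cons, Fin.cons_inj] at hi
    exact ⟨i, mem_filter.mpr ⟨him, hi.2⟩, hi.1⟩

lemma outDegree_add_eq_inDegree_add (hinj : Set.InjOn (window f (k + 1)) (range m))
    (u : Fin k → α) :
    outDegree (windows f (k + 1) m) u + (if window f k m = u then 1 else 0) =
      inDegree (windows f (k + 1) m) u + (if window f k 0 = u then 1 else 0) := by
  rw [← card_filter_window_eq_outDegree hinj, ← card_filter_window_succ_eq_inDegree hinj,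
    card_filter, card_filter, ← sum_range_succ,
    ← sum_range_succ' fun i => if window f k i = u then 1 else 0]

lemma outDegree_eq_inDegree_of_closed (hinj : Set.InjOn (window f (k + 1)) (range m))
    (hclosed : window f k m = window f k 0) (u : Fin k → α) :
    outDegree (windows f (k + 1) m) u = inDegree (windows f (k + 1) m) u := by
  have hdeg := outDegree_add_eq_inDegree_add hinj u
  rw [hclosed] at hdeg
  exact Nat.add_right_cancel hdeg

end Degree

lemma window_eq_window_zero_of_saturated [Finite α]
    (hinj : Set.InjOn (window f (k + 1)) (range m))
    (hsat : ∀ a, Fin.snoc (window f k m) a ∈ windows f (k + 1) m) :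
    window f k m = window f k 0 := by
  have := Fintype.ofFinite α
  by_contra hne
  have hdeg := outDegree_add_eq_inDegree_add hinj (window f k m)
  rw [if_pos rfl, if_neg (Ne.symm hne), outDegree_eq_card_iff.mpr hsat] at hdeg
  have hle : inDegree (windows f (k + 1) m) (window f k m) ≤ Fintype.card α := card_le_univ _
  omega

lemma windows_eq_univ_of_saturated [Fintype α] (hinj : Set.InjOn (window f (k + 1)) (range m))
    (hlast : IsLastChoice c (windows f (k + 1) m)) (hzero : window f k 0 = fun _ => c)
    (hsat : ∀ a, Fin.snoc (window f k m) a ∈ windows f (k + 1) m) :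
    windows f (k + 1) m = univ := by
  have hclosed := window_eq_window_zero_of_saturated hinj hsat
  refine eq_univ_of_isLastChoice hlast (outDegree_eq_inDegree_of_closed hinj hclosed) ?_
  rwa [← hzero, ← hclosed]

lemma windows_update (f : ℕ → α) (k m : ℕ) (b : α) :
    windows (update f (m + k) b) (k + 1) (m + 1) =
      insert (Fin.snoc (window f k m) b) (windows f (k + 1) m) := by
  rw [windows, range_add_one, image_insert, window_succ_update,
    image_congr (eqOn_window_update f k m b), windows]

lemma injOn_window_update {b : α} (hinj : Set.InjOn (window f (k + 1)) (range m))
    (hb : Fin.snoc (window f k m) b ∉ windows f (k + 1) m) :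
    Set.InjOn (window (update f (m + k) b) (k + 1)) (range (m + 1)) := by
  have heq := eqOn_window_update f k m b
  rw [range_add_one, coe_insert, Set.injOn_insert (by simp), heq.injOn_iff, heq.image_eq,
    window_succ_update, ← coe_image]
  exact ⟨hinj, hb⟩

lemma IsLastChoice.exists_insert {W : Finset (Fin (k + 1) → α)} (hlast : IsLastChoice c W)
    {u : Fin k → α} (hu : ¬ ∀ a, Fin.snoc u a ∈ W) :
    ∃ b, Fin.snoc u b ∉ W ∧ IsLastChoice c (insert (Fin.snoc u b) W) := by
  by_cases hother : ∃ b, b ≠ c ∧ Fin.snoc u b ∉ W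
  · obtain ⟨b, hbc, hb⟩ := hother
    refine ⟨b, hb, fun v hv a => mem_insert_of_mem (hlast v ?_ a)⟩
    exact mem_of_mem_insert_of_ne hv fun h => hbc (Fin.snoc_inj.mp h).2.symm
  · push Not at hother
    refine ⟨c, fun h => hu (hlast u h), fun v hv a => ?_⟩
    rcases mem_insert.mp hv with h | h
    · obtain rfl := (Fin.snoc_inj.mp h).1
      rcases eq_or_ne a c with rfl | ha
      · exact mem_insert_self _ _
      · exact mem_insert_of_mem (hother a ha)
    · exact mem_insert_of_mem (hlast v h a)

theorem exists_saturated_extension [Finite α] {f : ℕ → α} {m : ℕ}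
    (hinj : Set.InjOn (window f (k + 1)) (range m))
    (hlast : IsLastChoice c (windows f (k + 1) m)) :
    ∃ (g : ℕ → α) (M : ℕ), m ≤ M ∧ (∀ t < m + k, g t = f t) ∧
      Set.InjOn (window g (k + 1)) (range M) ∧ IsLastChoice c (windows g (k + 1) M) ∧
      ∀ a, Fin.snoc (window g k M) a ∈ windows g (k + 1) M := by
  by_cases hsat : ∀ a, Fin.snoc (window f k m) a ∈ windows f (k + 1) m
  · exact ⟨f, m, le_rfl, fun _ _ => rfl, hinj, hlast, hsat⟩
  obtain ⟨b, hb, hlast'⟩ := hlast.exists_insert hsat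
  rw [← windows_update] at hlast'
  have hinj' := injOn_window_update hinj hb
  obtain ⟨g, M, hM, hg, hrest⟩ := exists_saturated_extension hinj' hlast'
  refine ⟨g, M, by omega, fun t ht => ?_, hrest⟩
  rw [hg t (by omega), update_of_ne (by omega)]
termination_by Nat.card α ^ (k + 1) - m
decreasing_by exact Nat.sub_lt_sub_left (le_card_pow_of_injOn_window hinj') m.lt_succ_self

theorem exists_periodic_extension [Fintype α]
    (hinj : Set.InjOn (window f (k + 1)) (range m))
    (hlast : IsLastChoice c (windows f (k + 1) m)) (hzero : window f k 0 = fun _ => c) :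
    ∃ g : ℕ → α, Periodic g (Fintype.card α ^ (k + 1)) ∧ (∀ t < m + k, g t = f t) ∧
      Set.InjOn (window g (k + 1)) (range (Fintype.card α ^ (k + 1))) := by
  obtain ⟨g, M, hmM, hg, hgi, hgl, hsat⟩ := exists_saturated_extension hinj hlast
  have hclosed := window_eq_window_zero_of_saturated hgi hsat
  have hgzero : window g k 0 = fun _ => c := by
    rw [← hzero, window_eq_window_iff]
    exact fun t ht => hg _ (by omega)
  have hM : M = Fintype.card α ^ (k + 1) := by
    have := congrArg card (windows_eq_univ_of_saturated hgi hgl hgzero hsat)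
    simpa [windows, card_image_of_injOn hgi] using this
  rw [← hM]
  refine ⟨fun t => g (t % M), fun t => by simp, fun t ht => ?_, ?_⟩
  · exact (apply_mod_of_window_eq hclosed (by omega)).trans (hg t ht)
  · refine hgi.congr fun i hi => window_eq_window_iff.mpr fun t ht => ?_
    have := mem_range.mp hi
    exact (apply_mod_of_window_eq hclosed (by omega)).symm

end Windows

section IsDeBruijn

variable {n : ℕ} {w x : List Bool}

lemma occ_eq_one_iff :
    occ w x = 1 ↔ ∃! i, i + w.length ≤ x.length ∧ (x.drop i).take w.length = w := by
  have hocc : occ w x = ((Finset.range (x.length + 1 - w.length)).filter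
      fun i => (x.drop i).take w.length = w).card := rfl
  simp only [hocc, Finset.card_eq_one, Finset.singleton_iff_unique_mem, Finset.mem_filter,
    Finset.mem_range, Nat.lt_sub_iff_add_lt, Nat.lt_succ_iff]

lemma take_drop_map_range {α : Type*} (f : ℕ → α) {i N : ℕ} (h : i + n ≤ N) :
    (((List.range N).map f).drop i).take n = List.ofFn (window f n i) := by
  apply List.ext_getElem
  · simpa using by omega
  · intro t _ _
    simp [window]

lemma map_range_append_take {α : Type*} {f : ℕ → α} {N : ℕ} (hf : Function.Periodic f N)
    (hn : n ≤ N) :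
    (List.range N).map f ++ ((List.range N).map f).take n = (List.range (N + n)).map f := by
  rw [List.range_add, List.map_append, List.map_map, ← List.map_take, List.take_range,
    min_eq_left hn]
  exact congrArg _ (List.map_congr_left fun t _ => (add_comm N t ▸ hf t).symm)

theorem isDeBruijn_map_range {f : ℕ → Bool} (hn : 0 < n) (hf : Function.Periodic f (2 ^ n))
    (hinj : Set.InjOn (window f n) (Finset.range (2 ^ n))) :
    IsDeBruijn n ((List.range (2 ^ n)).map f) := by
  refine ⟨by simp, ?_⟩
  rintro w rfl
  have hpow := Nat.lt_two_pow_self (n := w.length)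
  rw [map_range_append_take hf (by omega), occ_eq_one_iff, List.length_map, List.length_range]
  have hoccurs {i : ℕ} (hi : i < 2 ^ w.length) :
      ((((List.range (2 ^ w.length + (w.length - 1))).map f).drop i).take w.length = w ↔
        window f w.length i = w.get) := by
    rw [take_drop_map_range f (by omega), ← List.ofFn_inj, List.ofFn_get]
  have hsurj := Finset.surjOn_of_injOn_of_card_le (t := Finset.univ) _ (by simp) hinj (by simp)
  obtain ⟨i, hi, hiw⟩ := hsurj (Finset.mem_coe.mpr (Finset.mem_univ w.get))
  have hilt := Finset.mem_range.mp hi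
  refine ⟨i, ⟨by omega, (hoccurs hilt).mpr hiw⟩, ?_⟩
  rintro j ⟨hj, hjw⟩
  have hjlt : j < 2 ^ w.length := by omega
  exact hinj (Finset.mem_range.mpr hjlt) hi (((hoccurs hjlt).mp hjw).trans hiw.symm)

lemma IsDeBruijn.length_eq_of_append {l₁ l₂ r₁ r₂ : List Bool} (hx : IsDeBruijn n x)
    (hw : w.length = n) (h₁ : x = l₁ ++ (w ++ r₁)) (h₂ : x = l₂ ++ (w ++ r₂)) :
    l₁.length = l₂.length := by
  refine (occ_eq_one_iff.mp (hx.2 w hw)).unique ⟨?_, ?_⟩ ⟨?_, ?_⟩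
  · simp [h₁]
  · simp [h₁]
  · simp [h₂]
  · simp [h₂]

lemma db_spec (h : ∃ x, IsDeBruijn n x) :
    IsDeBruijn n (db n) ∧ ∀ y, IsDeBruijn n y → db n ≤ y := by
  have hfin : {x | IsDeBruijn n x}.Finite :=
    (List.finite_length_eq Bool (2 ^ n)).subset fun x hx => hx.1
  have hmin : ∃ x, IsDeBruijn n x ∧ ∀ y, IsDeBruijn n y → x ≤ y :=
    Set.exists_min_image _ id hfin h
  rw [db, dif_pos hmin]
  exact hmin.choose_spec

end IsDeBruijn

section StartWord

open List

/-- The word `0^n 1 0^(n-2) 1 1`, the claimed beginning of `db n`; it is meant for `2 ≤ n`. -/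
def startWord (n : ℕ) : List Bool :=
  replicate n false ++ [true] ++ replicate (n - 2) false ++ [true, true]

lemma length_startWord {n : ℕ} (hn : 2 ≤ n) : (startWord n).length = 2 * n + 1 := by
  simp only [startWord, length_append, length_replicate, length_cons, length_nil]
  omega

lemma two_mul_add_one_le_two_pow {n : ℕ} (hn : 3 ≤ n) : 2 * n + 1 ≤ 2 ^ n := by
  induction n, hn using Nat.le_induction with
  | base => norm_num
  | succ n hn ih => rw [pow_succ]; omega

/- `List.cons_le_cons_iff` is about the core order on lists, not the one of the Mathlib instance. -/
lemma cons_le_cons_iff_lt_or_eq {α : Type*} [LinearOrder α] {a b : α} {x y : List α} :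
    a :: x ≤ b :: y ↔ a < b ∨ a = b ∧ x ≤ y := by
  simp only [le_iff_lt_or_eq, List.cons_lt_cons_iff, List.cons.injEq]
  tauto

lemma exists_eq_replicate_append_of_le {α : Type*} [LinearOrder α] {a : α} (ha : IsBot a) {m : ℕ}
    {x y : List α} (h : x ≤ replicate m a ++ y) (hm : m ≤ x.length) :
    ∃ x', x = replicate m a ++ x' ∧ x' ≤ y := by
  induction m generalizing x with
  | zero => exact ⟨x, rfl, h⟩
  | succ m ih =>
    obtain ⟨b, x, rfl⟩ := exists_cons_of_length_pos (Nat.zero_lt_of_lt hm)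
    rcases cons_le_cons_iff_lt_or_eq.mp h with hlt | ⟨rfl, hle⟩
    · exact absurd (ha b) hlt.not_ge
    · obtain ⟨x', rfl, hx'⟩ := ih hle (Nat.le_of_succ_le_succ hm)
      exact ⟨x', rfl, hx'⟩

lemma exists_eq_cons_of_le_true_cons {x y : List Bool} (h : x ≤ true :: y) (hx : 0 < x.length) :
    (∃ x', x = false :: x') ∨ ∃ x', x = true :: x' ∧ x' ≤ y := by
  obtain ⟨b, x, rfl⟩ := exists_cons_of_length_pos hx
  cases b
  · exact .inl ⟨x, rfl⟩
  · exact .inr ⟨x, rfl, by simpa [cons_le_cons_iff_lt_or_eq] using h⟩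

section Minimality

variable {k n : ℕ} {x y : List Bool}

lemma not_isDeBruijn_zeros_zero : ¬ IsDeBruijn n (replicate n false ++ false :: x) := by
  intro hx
  have hpos := hx.length_eq_of_append (w := replicate n false) (l₁ := []) (r₁ := false :: x)
    (l₂ := [false]) (r₂ := x) (by simp) rfl
    (by rw [append_cons, ← replicate_succ', replicate_succ]; rfl)
  simp at hpos

/- Both continuations of the second `0^(n-1)` repeat a word: `0^n` or `0^(n-1) 1`. -/
lemma not_isDeBruijn_zeros_one_zeros_zero {b : Bool} :
    ¬ IsDeBruijn (k + 2)
      (replicate (k + 2) false ++ true :: (replicate k false ++ false :: b :: x)) := by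
  intro hx
  cases b
  · have hpos := hx.length_eq_of_append (w := replicate (k + 2) false)
      (l₁ := []) (r₁ := true :: (replicate k false ++ false :: false :: x))
      (l₂ := replicate (k + 2) false ++ [true]) (r₂ := x)
      (by simp) rfl (by simp [replicate_succ'])
    simp at hpos
  · have hpos := hx.length_eq_of_append (w := replicate (k + 1) false ++ [true])
      (l₁ := [false]) (r₁ := replicate k false ++ false :: true :: x)
      (l₂ := replicate (k + 2) false ++ [true]) (r₂ := x)
      (by simp) (by simp [replicate_succ]) (by simp [replicate_succ'])
    simp at hpos

lemma not_isDeBruijn_zeros_one_zeros_one_zero :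
    ¬ IsDeBruijn (k + 3)
      (replicate (k + 3) false ++ true :: (replicate (k + 1) false ++ true :: false :: x)) := by
  intro hx
  have hpos := hx.length_eq_of_append (w := replicate (k + 1) false ++ [true, false])
    (l₁ := replicate 2 false) (r₁ := replicate k false ++ true :: false :: x)
    (l₂ := replicate (k + 3) false ++ [true]) (r₂ := x)
    (by simp) (by simp [replicate_succ]) (by simp)
  simp at hpos

theorem IsDeBruijn.startWord_prefix_of_le (hn : 3 ≤ n) (hx : IsDeBruijn n x)
    (hle : x ≤ startWord n ++ y) : startWord n <+: x := by
  obtain ⟨k, rfl⟩ := Nat.exists_eq_add_of_le' hn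
  have hlen : 2 * (k + 3) + 1 ≤ x.length := hx.1 ▸ two_mul_add_one_le_two_pow hn
  have hfalse : IsBot false := Bool.false_le
  simp only [startWord, append_assoc, cons_append, nil_append, Nat.reduceSubDiff] at hle ⊢
  obtain ⟨x, rfl, hle₁⟩ := exists_eq_replicate_append_of_le hfalse hle (by omega)
  rw [length_append, length_replicate] at hlen
  rcases exists_eq_cons_of_le_true_cons hle₁ (by omega) with ⟨x, rfl⟩ | ⟨x, rfl, hle₂⟩
  · exact absurd hx not_isDeBruijn_zeros_zero
  rw [length_cons] at hlen
  obtain ⟨x, rfl, hle₃⟩ := exists_eq_replicate_append_of_le hfalse hle₂ (by omega)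
  rw [length_append, length_replicate] at hlen
  rcases exists_eq_cons_of_le_true_cons hle₃ (by omega) with ⟨x, rfl⟩ | ⟨x, rfl, hle₄⟩
  · rw [length_cons] at hlen
    obtain ⟨b, x, rfl⟩ := exists_cons_of_length_pos (l := x) (by omega)
    exact absurd hx not_isDeBruijn_zeros_one_zeros_zero
  rw [length_cons] at hlen
  rcases exists_eq_cons_of_le_true_cons hle₄ (by omega) with ⟨x, rfl⟩ | ⟨x, rfl, -⟩
  · exact absurd hx not_isDeBruijn_zeros_one_zeros_one_zero
  exact ⟨x, by simp⟩

end Minimality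

section StartSeq

variable {k : ℕ}

/-- The word `1^k` followed by `startWord (k + 1)`, padded with zeros to a sequence. -/
def startSeq (k t : ℕ) : Bool := decide (t < k ∨ t = 2 * k + 1 ∨ t = 3 * k + 1 ∨ t = 3 * k + 2)

lemma startSeq_eq_true_iff {t : ℕ} :
    startSeq k t = true ↔ t < k ∨ t = 2 * k + 1 ∨ t = 3 * k + 1 ∨ t = 3 * k + 2 :=
  decide_eq_true_iff

lemma map_startSeq_eq_startWord (hk : 1 ≤ k) :
    (List.range (2 * k + 3)).map (fun t => startSeq k (t + k)) = startWord (k + 1) := by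
  apply List.ext_getElem
  · rw [length_startWord (by omega), length_map, length_range]
    rfl
  · intro t ht _
    rw [length_map, length_range] at ht
    simp only [startWord, startSeq, getElem_map, getElem_range, getElem_append]
    grind

lemma window_startSeq_ne {i j : ℕ} (hk : 2 ≤ k) (hij : i < j) (hj : j < 2 * k + 3) :
    window (startSeq k) (k + 1) i ≠ window (startSeq k) (k + 1) j := by
  intro heq
  have agree (t : ℕ) (ht : t < k + 1) :
      (i + t < k ∨ i + t = 2 * k + 1 ∨ i + t = 3 * k + 1 ∨ i + t = 3 * k + 2) ↔
        (j + t < k ∨ j + t = 2 * k + 1 ∨ j + t = 3 * k + 1 ∨ j + t = 3 * k + 2) := by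
    exact decide_eq_decide.mp (window_eq_window_iff.mp heq t ht)
  have first := agree 0 (by omega)
  have last := agree k (by omega)
  rcases lt_trichotomy i k with hi | rfl | hi
  · have lastOne := agree (k - 1 - i) (by omega)
    omega
  · have one := agree (if j ≤ 2 * i + 1 then 2 * i + 1 - j else i) (by split <;> omega)
    split at one <;> omega
  · have one := agree (2 * k + 1 - i) (by omega)
    have penultimate := agree (k - 1) (by omega)
    omega

lemma injOn_window_startSeq (hk : 2 ≤ k) :
    Set.InjOn (window (startSeq k) (k + 1)) (Finset.range (2 * k + 3)) := by
  intro i hi j hj heq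
  rcases lt_trichotomy i j with hij | hij | hij
  · exact absurd heq (window_startSeq_ne hk hij (Finset.mem_range.mp hj))
  · exact hij
  · exact absurd heq.symm (window_startSeq_ne hk hij (Finset.mem_range.mp hi))

lemma isLastChoice_true_windows {f : ℕ → Bool} {m : ℕ}
    (h : ∀ i < m, f (i + k) = true → ∃ j < m, window f k j = window f k i ∧ f (j + k) = false) :
    IsLastChoice true (windows f (k + 1) m) := by
  intro u hu a
  cases a with
  | true => exact hu
  | false =>
    obtain ⟨i, hi, hiu⟩ := Finset.mem_image.mp hu
    obtain ⟨hiu, hone⟩ := Fin.snoc_inj.mp ((window_succ_eq_snoc f k i).symm.trans hiu)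
    obtain ⟨j, hj, hji, hzero⟩ := h i (Finset.mem_range.mp hi) hone
    rw [← hiu, ← hji, ← hzero, ← window_succ_eq_snoc]
    exact window_mem_windows hj

lemma isLastChoice_windows_startSeq (hk : 2 ≤ k) :
    IsLastChoice true (windows (startSeq k) (k + 1) (2 * k + 3)) := by
  apply isLastChoice_true_windows
  intro i _ hone
  rw [startSeq_eq_true_iff] at hone
  have hi : i = k + 1 ∨ i = 2 * k + 1 ∨ i = 2 * k + 2 := by omega
  simp only [window_eq_window_iff, startSeq, decide_eq_decide, decide_eq_false_iff_not]
  -- The words `0^k`, `1 0^(k-1)` and `0^(k-1) 1` were followed by `0` earlier.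
  rcases hi with rfl | rfl | rfl
  · exact ⟨k, by omega, fun t _ => by omega, by omega⟩
  · exact ⟨k - 1, by omega, fun t _ => by omega, by omega⟩
  · exact ⟨k + 2, by omega, fun t _ => by omega, by omega⟩

lemma window_startSeq_zero : window (startSeq k) k 0 = fun _ => true :=
  funext fun t => startSeq_eq_true_iff.mpr (.inl (by omega))

theorem exists_isDeBruijn_startWord_prefix {n : ℕ} (hn : 3 ≤ n) :
    ∃ y, IsDeBruijn n y ∧ startWord n <+: y := by
  obtain ⟨k, rfl⟩ := Nat.exists_eq_add_of_le' (Nat.one_le_of_lt hn)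
  have hk : 2 ≤ k := by omega
  obtain ⟨g, hgper, hg, hginj⟩ := exists_periodic_extension (injOn_window_startSeq hk)
    (isLastChoice_windows_startSeq hk) window_startSeq_zero
  rw [Fintype.card_bool] at hgper hginj
  refine ⟨(List.range (2 ^ (k + 1))).map fun t => g (t + k),
    isDeBruijn_map_range k.succ_pos (hgper.add_const k) (injOn_window_add hgper hginj k), ?_⟩
  have hstart : startWord (k + 1) = (List.range (2 * k + 3)).map fun t => g (t + k) := by
    rw [← map_startSeq_eq_startWord (by omega)]
    refine List.map_congr_left fun t ht => (hg _ ?_).symm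
    have := List.mem_range.mp ht
    omega
  have hlen : 2 * k + 3 ≤ 2 ^ (k + 1) := two_mul_add_one_le_two_pow hn
  rw [hstart, ← min_eq_left hlen, ← List.take_range]
  exact (List.take_prefix _ _).map _

end StartSeq

end StartWord

/-- For every `n ≥ 3`, `db(n)[0..2n] = 0^n · 1 · 0^{n-2} · 1 · 1`. -/
theorem stmt1 (n : ℕ) (hn : 3 ≤ n) :
    (db n).take (2 * n + 1) =
      List.replicate n false ++ [true] ++ List.replicate (n - 2) false ++ [true, true] := by
  obtain ⟨_, hy, s, rfl⟩ := exists_isDeBruijn_startWord_prefix hn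
  obtain ⟨hdb, hmin⟩ := db_spec ⟨_, hy⟩
  have hprefix : startWord n <+: db n := hdb.startWord_prefix_of_le hn (hmin _ hy)
  rw [List.prefix_iff_eq_take, length_startWord (by omega)] at hprefix
  exact hprefix.symm
end

section
/- For every n ≥ 1 and every binary string w of length n, occ_B(w, S_n) = 1; that is, w occurs exactly once as a substring of S_n at a starting position divisible by n, so S_n is an enumeration of all binary strings of length n in aligned blocks. -/
/-!
De Bruijn strings exist by joining cycles: rotation of words of length `n` is a permutation that
shifts every word by one letter, and it keeps this property when it is preceded by a permutation
that changes only the first letter. Composing with the transposition of two words from different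
cycles merges these cycles. Since rotations and changes of the first letter connect all words, a
choice that joins as many cycles as possible has a single cycle, and reading the first letters along
it gives a de Bruijn string.

Now let `x` be any de Bruijn string of order `n = 2^s * t`, `t` odd, in place of `db n`. Each
`B_{n,i}` consists of `2^(n-s)` blocks of length `n`, so block `m` of `S_n` is the cyclic factor of
`x` at position `⌊m / 2^(n-s)⌋ + n * m` modulo `2^n`. This position determines `m`: modulo `2^s` it
is the quotient `⌊m / 2^(n-s)⌋`, and then `n * m` modulo `2^n`, with `t` odd, gives `m` modulo
`2^(n-s)`. Hence the blocks run through all cyclic factors of `x`, each exactly once.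
-/

section CycleJoining

open Equiv Equiv.Perm

variable {V : Type*}

lemma sameCycle_setoid_le {σ : Perm V} {s : Setoid V} (h : ∀ v, s v (σ v)) :
    SameCycle.setoid σ ≤ s := by
  rintro u _ ⟨k, rfl⟩
  induction k with
  | zero => exact s.refl u
  | succ k ih =>
    rw [add_comm, zpow_add, zpow_one, mul_apply]
    exact s.trans ih (h _)
  | pred k ih =>
    refine s.trans ih (s.symm ?_)
    have := h ((σ ^ (-(k : ℤ) - 1)) u)
    rwa [← mul_apply, ← zpow_one_add, add_sub_cancel] at this

lemma isCycleOn_univ_of_setoid_eq_top [Fintype V] {f : Perm V}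
    (hf : SameCycle.setoid f = ⊤) : f.IsCycleOn (Finset.univ : Finset V) := by
  rw [Finset.coe_univ]
  exact ⟨Set.bijOn_univ.2 f.bijective, fun a _ b _ ↦ Setoid.eq_top_iff.1 hf a b⟩

lemma sameCycle_mul_swap [Finite V] [DecidableEq V] {σ : Perm V} {x y : V}
    (h : ¬ σ.SameCycle x y) :
    (σ * swap x y).SameCycle x y := by
  -- From `x`, the new permutation follows the `σ`-cycle of `y` until it reaches `y`.
  have sameCycle_pow : ∀ j : ℕ, (σ * swap x y).SameCycle x ((σ ^ (j + 1)) y) := by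
    intro j
    induction j with
    | zero => exact ⟨1, by simp⟩
    | succ j ih =>
      rw [pow_succ', mul_apply]
      by_cases hy : (σ ^ (j + 1)) y = y
      · exact ⟨1, by simp [hy]⟩
      · have hx : (σ ^ (j + 1)) y ≠ x := fun hx ↦
          h (SameCycle.symm ⟨(j + 1 : ℕ), by rwa [zpow_natCast]⟩)
        rwa [← sameCycle_apply_right, mul_apply, swap_apply_of_ne_of_ne hx hy] at ih
  obtain ⟨i, hi, -, hiy⟩ := (SameCycle.refl σ y).exists_pow_eq''
  simpa [Nat.sub_add_cancel hi, hiy] using sameCycle_pow (i - 1)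

lemma sameCycle_setoid_lt_mul_swap [Finite V] [DecidableEq V] {σ : Perm V} {x y : V}
    (h : ¬ σ.SameCycle x y) :
    SameCycle.setoid σ < SameCycle.setoid (σ * swap x y) := by
  have hxy := sameCycle_mul_swap h
  refine lt_of_le_not_ge (sameCycle_setoid_le fun v ↦ ?_) fun hle ↦ h (hle hxy)
  obtain rfl | hx := eq_or_ne v x
  · exact hxy.trans ⟨1, by simp⟩
  obtain rfl | hy := eq_or_ne v y
  · exact hxy.symm.trans ⟨1, by simp⟩
  · exact ⟨1, by simp [swap_apply_of_ne_of_ne hx hy]⟩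

theorem exists_sameCycle_setoid_mul_eq_top [Finite V] {σ : Perm V} {r : Setoid V}
    (h : r ⊔ SameCycle.setoid σ = ⊤) :
    ∃ τ : Perm V, (∀ v, r v (τ v)) ∧ SameCycle.setoid (σ * τ) = ⊤ := by
  classical
  obtain ⟨τ, hτ, hmax⟩ := Set.Finite.exists_maximalFor (fun τ ↦ SameCycle.setoid (σ * τ))
    {τ : Perm V | ∀ v, r v (τ v)} (Set.toFinite _) ⟨1, r.refl⟩
  have r_le : r ≤ SameCycle.setoid (σ * τ) := by
    intro x y hxy
    by_contra hne
    have hswap : ∀ v, r v (swap x y v) := fun v ↦ by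
      rw [swap_apply_def]
      split_ifs with hx hy
      · exact hx ▸ hxy
      · exact hy ▸ r.symm hxy
      · exact r.refl v
    have hlt := sameCycle_setoid_lt_mul_swap hne
    rw [mul_assoc] at hlt
    exact hlt.not_ge (hmax (fun v ↦ r.trans (hswap v) (hτ _)) hlt.le)
  have σ_le : SameCycle.setoid σ ≤ SameCycle.setoid (σ * τ) := by
    refine sameCycle_setoid_le fun v ↦ SameCycle.trans (y := τ⁻¹ v) ?_ ⟨1, by simp⟩
    exact r_le (r.symm (by simpa using hτ (τ⁻¹ v)))
  exact ⟨τ, hτ, top_le_iff.1 (h ▸ sup_le r_le σ_le)⟩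

lemma bijective_pow_apply [Fintype V] {f : Perm V} (hf : SameCycle.setoid f = ⊤) (z : V) :
    Function.Bijective fun p : Fin (Fintype.card V) ↦ (f ^ (p : ℕ)) z := by
  have hcyc := isCycleOn_univ_of_setoid_eq_top hf
  constructor
  · intro p q hpq
    rw [hcyc.pow_apply_eq_pow_apply (Finset.mem_univ z)] at hpq
    exact Fin.ext (hpq.eq_of_lt_of_lt p.2 q.2)
  · intro v
    obtain ⟨p, hp, hpv⟩ := hcyc.exists_pow_eq (Finset.mem_univ z) (Finset.mem_univ v)
    exact ⟨⟨p, hp⟩, hpv⟩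

end CycleJoining

section Shift

open Equiv Equiv.Perm

variable {ι α : Type*}

lemma setoid_eq_top_of_rel_comp_of_rel_update [Finite ι] [DecidableEq ι] {π : Perm ι} {i₀ : ι}
    (hπ : ∀ i, π.SameCycle i₀ i) {s : Setoid (ι → α)} (rel_comp : ∀ x, s x (x ∘ π))
    (rel_update₀ : ∀ x b, s x (Function.update x i₀ b)) : s = ⊤ := by
  have := Fintype.ofFinite ι
  have rel_update (i : ι) : ∀ x b, s x (Function.update x i b) := by
    obtain ⟨k, rfl⟩ := (hπ i).exists_nat_pow_eq
    induction k with
    | zero => exact rel_update₀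
    | succ k ih =>
      intro x b
      rw [pow_succ', mul_apply]
      have hcomp := rel_comp (Function.update x (π ((π ^ k) i₀)) b)
      rw [Function.update_comp_equiv, symm_apply_apply] at hcomp
      exact s.trans (rel_comp x) (s.trans (ih _ b) (s.symm hcomp))
  refine Setoid.eq_top_iff.2 fun x y ↦ ?_
  have rel_piecewise (S : Finset ι) : s x (S.piecewise y x) := by
    induction S using Finset.induction_on with
    | empty => simp
    | insert i S _ ih =>
      rw [Finset.piecewise_insert]
      exact s.trans ih (rel_update i _ _)
  simpa using rel_piecewise Finset.univ

lemma exists_shift_sameCycle_setoid_eq_top (α : Type*) [Finite α] (m : ℕ) :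
    ∃ f : Perm (Fin (m + 1) → α),
      (∀ v (i : Fin m), f v i.castSucc = v i.succ) ∧ SameCycle.setoid f = ⊤ := by
  let π : Perm (Fin (m + 1)) := Equiv.addRight 1
  let rotate : Perm (Fin (m + 1) → α) := π.symm.arrowCongr (Equiv.refl α)
  have hπ : ∀ i, π.SameCycle 0 i :=
    Fin.induction (.refl π 0) fun i hi ↦ by simpa [π] using sameCycle_apply_right.2 hi
  have connected : Setoid.ker (Fin.tail : (Fin (m + 1) → α) → _) ⊔ SameCycle.setoid rotate = ⊤ :=
    setoid_eq_top_of_rel_comp_of_rel_update hπ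
      (fun _ ↦ (le_sup_right : _ ≤ _ ⊔ SameCycle.setoid rotate) ⟨1, rfl⟩)
      (fun x b ↦ (le_sup_left : Setoid.ker _ ≤ _) (Fin.tail_update_zero x b).symm)
  obtain ⟨τ, hτ, htop⟩ := exists_sameCycle_setoid_mul_eq_top connected
  refine ⟨rotate * τ, fun v i ↦ ?_, htop⟩
  have : v i.succ = τ v i.succ := congrFun (hτ v) i
  simp [rotate, π, Equiv.arrowCongr, this]

lemma shift_pow_apply {m : ℕ} {f : Perm (Fin (m + 1) → α)}
    (hf : ∀ v (i : Fin m), f v i.castSucc = v i.succ) (v : Fin (m + 1) → α) (i : Fin (m + 1)) :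
    ∀ j : ℕ, (f ^ j) v i = (f ^ (j + i)) v 0 := by
  induction i using Fin.induction with
  | zero => simp
  | succ i ih =>
    intro j
    rw [← hf ((f ^ j) v), ← mul_apply, ← pow_succ', ih, Fin.val_castSucc, Fin.val_succ,
      add_right_comm, add_assoc]

end Shift

section CyclicFactor

variable {α : Type*}

/-- The factor of length `n` starting at position `p` of the cyclic string `x`; positions are read
modulo the length of `x`. -/
def cyclicFactor (n : ℕ) (x : List α) (p : ℕ) : List α := (x.rotate p).take n

lemma cyclicFactor_mod (n : ℕ) (x : List α) (p : ℕ) :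
    cyclicFactor n x (p % x.length) = cyclicFactor n x p := by
  rw [cyclicFactor, List.rotate_mod, cyclicFactor]

lemma cyclicFactor_rotate (n : ℕ) (x : List α) (i p : ℕ) :
    cyclicFactor n (x.rotate i) p = cyclicFactor n x (i + p) := by
  rw [cyclicFactor, List.rotate_rotate, cyclicFactor]

lemma take_drop_append_eq_cyclicFactor {n p k : ℕ} {x y : List α} (hy : y.take k = x.take k)
    (hp : p ≤ x.length) (hn : n ≤ x.length) (hnp : p + n ≤ x.length + k) :
    ((x ++ y).drop p).take n = cyclicFactor n x p := by
  rw [cyclicFactor, List.rotate_eq_drop_append_take hp, List.drop_append_of_le_length hp,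
    List.take_append, List.take_append, List.take_take, List.length_drop]
  have := congrArg (List.take (n - (x.length - p))) hy
  rw [List.take_take, List.take_take] at this
  rw [min_eq_left (by omega)] at this ⊢
  rw [this]

lemma take_drop_flatten_replicate {n p t : ℕ} {x : List α} (hn : n ≤ x.length)
    (hnp : p + n ≤ t * x.length) :
    ((List.replicate t x).flatten.drop p).take n = cyclicFactor n x p := by
  induction t generalizing p with
  | zero => simp_all [cyclicFactor]
  | succ t ih =>
    rw [List.replicate_succ, List.flatten_cons]
    rw [Nat.add_mul, one_mul] at hnp
    rcases le_total x.length p with hp | hp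
    · obtain ⟨q, rfl⟩ := Nat.exists_eq_add_of_le hp
      rw [← List.drop_drop, List.drop_left, ih (by omega), ← cyclicFactor_mod (p := x.length + q),
        Nat.add_mod_left, cyclicFactor_mod]
    · refine take_drop_append_eq_cyclicFactor (k := p + n - x.length) ?_ hp hn (by omega)
      cases t with
      | zero => simp [show p + n - x.length = 0 by omega]
      | succ t =>
        rw [List.replicate_succ, List.flatten_cons, List.take_append_of_le_length (by omega)]

lemma take_drop_flatten_map_range {n k m i r : ℕ} {f : ℕ → List α} (hf : ∀ j, (f j).length = k)
    (hi : i < m) (hr : r + n ≤ k) :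
    ((((List.range m).map f).flatten).drop (k * i + r)).take n = ((f i).drop r).take n := by
  have drop_blocks : ((List.range m).map f).flatten.drop (k * i) =
      (((List.range m).map f).drop i).flatten := by
    rw [← List.drop_sum_flatten]
    simp [Function.comp_def, hf, hi.le, mul_comm]
  rw [← List.drop_drop, drop_blocks, List.drop_eq_getElem_cons (i := i) (by simpa),
    List.getElem_map, List.getElem_range, List.flatten_cons,
    List.drop_append_of_le_length (by rw [hf]; omega),
    List.take_append_of_le_length (by rw [List.length_drop, hf]; omega)]

/-- The concatenation `x_0^t x_1^t ⋯ x_{m-1}^t`, where `x_i` is the cyclic left shift of `x` by `i`;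
`S_n` is the case `x = db n`, `m = 2^s`. -/
def rotationBlocks (x : List α) (m t : ℕ) : List α :=
  ((List.range m).map fun i ↦ (List.replicate t (x.rotate i)).flatten).flatten

lemma length_rotationBlocks (x : List α) (m t : ℕ) :
    (rotationBlocks x m t).length = m * t * x.length := by
  simp [rotationBlocks, Function.comp_def, mul_assoc]

lemma take_drop_rotationBlocks {a t K m : ℕ} {x : List α} (hx : x.length = a * K) (htK : t ≤ K)
    (hm : m < a * K) :
    ((rotationBlocks x a t).drop (a * t * m)).take (a * t) =
      cyclicFactor (a * t) x (m / K + a * t * m) := by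
  have hK : 0 < K := Nat.pos_of_mul_pos_left (Nat.zero_lt_of_lt hm)
  set i := m / K
  set j := m % K
  have hi : i < a := Nat.div_lt_of_lt_mul (mul_comm a K ▸ hm)
  have hj : j + 1 ≤ K := Nat.mod_lt m hK
  have split_pos : a * t * m = t * (a * K) * i + a * t * j := by
    rw [← Nat.div_add_mod m K]; ring
  have fits : a * t * j + a * t ≤ t * (a * K) := by
    calc a * t * j + a * t = a * t * (j + 1) := by ring
      _ ≤ a * t * K := Nat.mul_le_mul_left _ hj
      _ = t * (a * K) := by ring
  have hshort : a * t ≤ a * K := Nat.mul_le_mul_left a htK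
  have length_block (j : ℕ) : (List.replicate t (x.rotate j)).flatten.length = t * (a * K) := by
    simp [hx]
  calc ((rotationBlocks x a t).drop (a * t * m)).take (a * t)
      = ((List.replicate t (x.rotate i)).flatten.drop (a * t * j)).take (a * t) := by
        rw [split_pos]
        exact take_drop_flatten_map_range length_block hi fits
    _ = cyclicFactor (a * t) (x.rotate i) (a * t * j) :=
        take_drop_flatten_replicate (by simpa [hx]) (by simpa [hx])
    _ = cyclicFactor (a * t) x (i + a * t * j) := cyclicFactor_rotate ..
    _ = cyclicFactor (a * t) x (i + a * t * m) := by
        rw [← cyclicFactor_mod, ← cyclicFactor_mod (p := i + a * t * m), hx, split_pos,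
          show i + (t * (a * K) * i + a * t * j) = i + a * t * j + a * K * (t * i) by ring,
          Nat.add_mul_mod_self_left]

lemma bijective_ofNat_div_add_mul {a t K : ℕ} [NeZero (a * K)] (h : K.Coprime t) :
    Function.Bijective fun m : Fin (a * K) ↦ Fin.ofNat (a * K) (m / K + a * t * m) := by
  have ha : 0 < a := Nat.pos_of_mul_pos_right (NeZero.pos (a * K))
  have div_lt (m : Fin (a * K)) : (m : ℕ) / K < a := Nat.div_lt_of_lt_mul (mul_comm a K ▸ m.2)
  refine Finite.injective_iff_bijective.1 fun m m' hmm' ↦ ?_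
  have hmod : m / K + a * t * m ≡ m' / K + a * t * m' [MOD a * K] := congrArg Fin.val hmm'
  have quot_eq : (m : ℕ) / K = m' / K := by
    have := hmod.of_mul_right K
    simp only [Nat.ModEq, mul_assoc a, Nat.add_mul_mod_self_left] at this
    exact Nat.ModEq.eq_of_lt_of_lt this (div_lt m) (div_lt m')
  have rem_eq : (m : ℕ) ≡ m' [MOD K] := by
    rw [quot_eq, mul_assoc, mul_assoc] at hmod
    exact ((hmod.add_left_cancel' _).mul_left_cancel' ha.ne').cancel_left_of_coprime h
  exact Fin.ext (by rw [← Nat.div_add_mod m K, ← Nat.div_add_mod m' K, quot_eq, rem_eq])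

lemma existsUnique_take_drop_rotationBlocks {n a t K : ℕ} {x w : List α} (hn : n = a * t)
    (hx : x.length = a * K) (htK : t ≤ K) (hcop : K.Coprime t)
    (hw : ∃! p : Fin (a * K), cyclicFactor n x p = w) :
    ∃! m : Fin (a * K), ((rotationBlocks x a t).drop (n * m)).take n = w := by
  subst hn
  have : NeZero (a * K) := ⟨(Nat.zero_lt_of_lt hw.exists.choose.2).ne'⟩
  rw [(bijective_ofNat_div_add_mul hcop).existsUnique_iff] at hw
  simpa only [take_drop_rotationBlocks hx htK (Fin.is_lt _), Fin.val_ofNat, ← hx,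
    cyclicFactor_mod] using hw

end CyclicFactor

section Occurrences

lemma length_filter_range_eq_one_iff {N : ℕ} {p : ℕ → Bool} :
    ((List.range N).filter p).length = 1 ↔ ∃! i : Fin N, p i := by
  rw [← List.map_coe_finRange_eq_range, List.filter_map, List.length_map,
    ← List.toFinset_card_of_nodup ((List.nodup_finRange N).filter _),
    Finset.card_eq_one_iff_existsUnique]
  simp

lemma occ_append_take_eq_one_iff {n : ℕ} (hn : n ≠ 0) {x w : List Bool} (hx : n ≤ x.length)
    (hw : w.length = n) :
    occ w (x ++ x.take (n - 1)) = 1 ↔ ∃! p : Fin x.length, cyclicFactor n x p = w := by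
  have hcount : (x ++ x.take (n - 1)).length + 1 - w.length = x.length := by simp; omega
  rw [occ, hcount, length_filter_range_eq_one_iff]
  refine existsUnique_congr fun p ↦ ?_
  rw [decide_eq_true_iff, hw, take_drop_append_eq_cyclicFactor (k := n - 1) (by simp) p.2.le hx
    (by omega)]

lemma existsUnique_dvd_and_iff {n M N : ℕ} {P : ℕ → Prop} (hn : n ≠ 0)
    (hM : ∀ m, n * m < M ↔ m < N) :
    (∃! i : Fin M, n ∣ i ∧ P i) ↔ ∃! m : Fin N, P (n * m) := by
  constructor
  · rintro ⟨⟨_, hi⟩, ⟨⟨m, rfl⟩, hP⟩, huniq⟩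
    refine ⟨⟨m, (hM m).1 hi⟩, hP, fun m' hm' ↦ ?_⟩
    have := huniq ⟨n * m', (hM m').2 m'.2⟩ ⟨n.dvd_mul_right m', hm'⟩
    simpa [hn, Fin.ext_iff] using this
  · rintro ⟨m, hP, huniq⟩
    refine ⟨⟨n * m, (hM m).2 m.2⟩, ⟨n.dvd_mul_right m, hP⟩, ?_⟩
    rintro ⟨i, hi⟩ ⟨⟨m', hm'⟩, hP'⟩
    obtain rfl : i = n * m' := hm'
    simp [← huniq ⟨m', (hM m').1 hi⟩ hP']

lemma occB_eq_one_iff {n N : ℕ} (hn : n ≠ 0) {x w : List Bool} (hx : x.length = n * N)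
    (hw : w.length = n) :
    occB w x = 1 ↔ ∃! m : Fin N, (x.drop (n * m)).take n = w := by
  have aligned_lt_iff (m : ℕ) : n * m < x.length + 1 - n ↔ m < N := by
    have aligned_le_iff : n * m + n ≤ n * N ↔ m < N := by
      rw [← Nat.mul_succ, Nat.mul_le_mul_left_iff (Nat.pos_of_ne_zero hn), Nat.succ_le_iff]
    omega
  rw [occB, length_filter_range_eq_one_iff, hw]
  simp only [Bool.and_eq_true, decide_eq_true_iff, ← Nat.dvd_iff_mod_eq_zero]
  exact existsUnique_dvd_and_iff (P := fun i ↦ (x.drop i).take n = w) hn aligned_lt_iff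

end Occurrences

section DeBruijn

open Equiv Equiv.Perm

variable {α : Type*}

lemma cyclicFactor_ofFn_pow_apply {m N : ℕ} {f : Perm (Fin (m + 1) → α)}
    (hf : ∀ v (i : Fin m), f v i.castSucc = v i.succ) {z : Fin (m + 1) → α} (hz : (f ^ N) z = z)
    (hmN : m < N) (p : ℕ) :
    cyclicFactor (m + 1) (List.ofFn fun j : Fin N ↦ (f ^ (j : ℕ)) z 0) p =
      List.ofFn ((f ^ p) z) := by
  have pow_mod_apply (j : ℕ) : (f ^ (j % N)) z = (f ^ j) z := by
    conv_rhs => rw [← Nat.mod_add_div j N, pow_add, pow_mul, mul_apply,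
      pow_apply_eq_self_of_apply_eq_self hz]
  refine List.ext_getElem (by simpa [cyclicFactor]) fun k _ hk ↦ ?_
  rw [List.length_ofFn] at hk
  rw [List.getElem_ofFn, shift_pow_apply hf z ⟨k, hk⟩ p]
  simp [cyclicFactor, List.getElem_rotate, pow_mod_apply, add_comm k p]

theorem exists_forall_existsUnique_cyclicFactor_eq (α : Type*) [Fintype α] [Nontrivial α] {n : ℕ}
    (hn : n ≠ 0) :
    ∃ x : List α, x.length = Fintype.card α ^ n ∧
      ∀ w : List α, w.length = n → ∃! p : Fin x.length, cyclicFactor n x p = w := by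
  classical
  obtain ⟨m, rfl⟩ := Nat.exists_eq_add_one_of_ne_zero hn
  obtain ⟨f, hshift, hf⟩ := exists_shift_sameCycle_setoid_eq_top α m
  obtain ⟨z⟩ : Nonempty (Fin (m + 1) → α) := inferInstance
  set N := Fintype.card (Fin (m + 1) → α) with hN
  have hcard : N = Fintype.card α ^ (m + 1) := by simp [hN]
  have hmN : m < N := by
    rw [hcard]
    exact m.lt_succ_self.trans (Nat.lt_pow_self Fintype.one_lt_card)
  have hz : (f ^ N) z = z :=
    (isCycleOn_univ_of_setoid_eq_top hf).pow_card_apply (Finset.mem_univ z)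
  refine ⟨List.ofFn fun j : Fin N ↦ (f ^ (j : ℕ)) z 0, by rw [List.length_ofFn, hcard], ?_⟩
  intro w hw
  obtain ⟨v, rfl⟩ : ∃ v : Fin (m + 1) → α, List.ofFn v = w :=
    ⟨fun i ↦ w[i], List.ext_getElem (by rw [List.length_ofFn, hw]) fun _ _ _ ↦ List.getElem_ofFn _⟩
  simp only [cyclicFactor_ofFn_pow_apply hshift hz hmN, List.ofFn_inj]
  rw [List.length_ofFn]
  exact (bijective_pow_apply hf z).existsUnique v

lemma isDeBruijn_iff {n : ℕ} (hn : n ≠ 0) {x : List Bool} :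
    IsDeBruijn n x ↔ x.length = 2 ^ n ∧
      ∀ w : List Bool, w.length = n → ∃! p : Fin x.length, cyclicFactor n x p = w := by
  refine and_congr_right fun hx ↦ forall₂_congr fun w hw ↦ ?_
  exact occ_append_take_eq_one_iff hn (hx ▸ Nat.lt_two_pow_self.le) hw

lemma exists_isDeBruijn {n : ℕ} (hn : n ≠ 0) : ∃ x, IsDeBruijn n x := by
  simpa only [isDeBruijn_iff hn, Fintype.card_bool] using
    exists_forall_existsUnique_cyclicFactor_eq Bool hn

lemma isDeBruijn_db {n : ℕ} (hn : n ≠ 0) : IsDeBruijn n (db n) := by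
  have hfin : {x | IsDeBruijn n x}.Finite :=
    (List.finite_length_eq Bool (2 ^ n)).subset fun _ hx ↦ hx.1
  have hleast : ∃ x, IsDeBruijn n x ∧ ∀ y, IsDeBruijn n y → x ≤ y :=
    Set.exists_min_image _ id hfin (exists_isDeBruijn hn)
  rw [db, dif_pos hleast]
  exact hleast.choose_spec.1

end DeBruijn

theorem stmt3_general {n s t : ℕ} (hn : n = 2 ^ s * t) (ht : Odd t) {x : List Bool}
    (hx : IsDeBruijn n x) {w : List Bool} (hw : w.length = n) :
    occB w (rotationBlocks x (2 ^ s) t) = 1 := by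
  have hn₀ : n ≠ 0 := hn ▸ mul_ne_zero (by positivity) ht.pos.ne'
  obtain ⟨hlen, hfactor⟩ := (isDeBruijn_iff hn₀).1 hx
  have hsn : s ≤ n := Nat.lt_two_pow_self.le.trans (hn ▸ Nat.le_mul_of_pos_right _ ht.pos)
  have hpow : 2 ^ n = 2 ^ s * 2 ^ (n - s) := (pow_mul_pow_sub 2 hsn).symm
  have ht_le : t ≤ 2 ^ (n - s) := by
    refine Nat.le_of_mul_le_mul_left ?_ (Nat.two_pow_pos s)
    rw [← hn, ← hpow]
    exact Nat.lt_two_pow_self.le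
  have hcop : (2 ^ (n - s)).Coprime t := (Nat.coprime_two_left.2 ht).pow_left _
  have hw_factor := hfactor w hw
  rw [hpow] at hlen
  rw [hlen] at hw_factor
  rw [occB_eq_one_iff hn₀ (by rw [length_rotationBlocks, ← hn, hlen]) hw]
  exact existsUnique_take_drop_rotationBlocks hn hlen ht_le hcop hw_factor

/-- For every `n ≥ 1` and every binary string `w` of length `n`, `w` occurs exactly once
in `S_n` at a starting position divisible by `n`. -/
theorem stmt3 (n : ℕ) (hn : 1 ≤ n) (w : List Bool) (hw : w.length = n) :
    occB w (Sblk n) = 1 :=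
  have hn₀ : n ≠ 0 := Nat.one_le_iff_ne_zero.1 hn
  stmt3_general (Nat.ordProj_mul_ordCompl_eq_self n 2).symm
    (Nat.coprime_two_left.1 (Nat.coprime_ordCompl Nat.prime_two hn₀)) (isDeBruijn_db hn₀) hw
end

section
/- Let x be a de Bruijn string of order n and let w be a binary string with |w| ≥ n. In the infinite periodic sequence x^ω (x repeated forever), any two occurrences of w start at positions that are congruent modulo 2^n. Consequently, every occurrence of w in x^ω is followed by the same bit. -/
/-- `w` occurs at position `p` of the infinite sequence `f`. -/
def occursAtSeq (w : List Bool) (f : ℕ → Bool) (p : ℕ) : Prop :=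
  ∀ k, k < w.length → f (p + k) = w.getD k false

/-!
Since `|x| = 2 ^ n ≥ n - 1`, the length-`n` windows of the periodic sequence `x^ω` that start in
its first period are exactly the length-`n` substrings of `x ++ x[0..n-2]`. Each word of length `n`
occurs there at most once, so the prefix of `w` of length `n` already determines the position of an
occurrence of `w` modulo the period `|x|`, and with it the bit that follows.
-/

/-- The infinite periodic sequence `x^ω` in which occurrences of words are compared; by convention
it is constantly `false` when `x` is empty. -/
def omegaPow (x : List Bool) (i : ℕ) : Bool := x.getD (i % x.length) false

theorem omegaPow_periodic (x : List Bool) : Function.Periodic (omegaPow x) x.length := by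
  intro i
  simp only [omegaPow, Nat.add_mod_right]

theorem omegaPow_congr {x : List Bool} {i j : ℕ} (h : i ≡ j [MOD x.length]) :
    omegaPow x i = omegaPow x j :=
  congrArg (x.getD · false) h

theorem getElem?_append_take_eq_omegaPow {x : List Bool} {m i : ℕ} (hm : m ≤ x.length)
    (hi : i < x.length + m) : (x ++ x.take m)[i]? = some (omegaPow x i) := by
  rw [omegaPow, List.getD_eq_getElem _ _ (Nat.mod_lt _ (by omega)), ← List.getElem?_eq_getElem]
  obtain hlt | hge := lt_or_ge i x.length
  · rw [List.getElem?_append_left hlt, Nat.mod_eq_of_lt hlt]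
  · rw [List.getElem?_append_right hge, List.getElem?_take_of_lt (by omega),
      Nat.mod_eq_sub_mod hge, Nat.mod_eq_of_lt (by omega)]

theorem occursAtSeq.of_prefix {v w : List Bool} {f : ℕ → Bool} {p : ℕ}
    (hw : occursAtSeq w f p) (hv : v <+: w) : occursAtSeq v f p := by
  intro k hk
  rw [hw k (hk.trans_le hv.length_le), List.getD_eq_getElem _ _ (hk.trans_le hv.length_le),
    List.getD_eq_getElem _ _ hk, hv.getElem hk]

theorem occursAtSeq_mod_period_iff {f : ℕ → Bool} {c : ℕ} (hf : Function.Periodic f c)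
    (w : List Bool) (p : ℕ) : occursAtSeq w f (p % c) ↔ occursAtSeq w f p := by
  have hmod (k : ℕ) : f (p % c + k) = f (p + k) := by
    rw [← hf.map_mod_nat, Nat.mod_add_mod, hf.map_mod_nat]
  simp only [occursAtSeq, hmod]

theorem prefix_drop_append_take_iff_occursAtSeq {v x : List Bool} {m p : ℕ} (hm : m ≤ x.length)
    (hv : v.length ≤ m + 1) (hp : p < x.length) :
    v <+: (x ++ x.take m).drop p ↔ occursAtSeq v (omegaPow x) p := by
  rw [List.prefix_iff_getElem?]
  refine forall₂_congr fun k hk => ?_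
  rw [List.getElem?_drop, getElem?_append_take_eq_omegaPow hm (by omega), Option.some_inj,
    List.getD_eq_getElem _ _ hk]

theorem occ_eq_card_filter_prefix_drop (w x : List Bool) :
    occ w x = ((Finset.range (x.length + 1)).filter fun i => w <+: x.drop i).card := by
  have hfilter : (Finset.range (x.length + 1)).filter (fun i => w <+: x.drop i) =
      (Finset.range (x.length + 1 - w.length)).filter
        (fun i => (x.drop i).take w.length = w) := by
    ext i
    simp only [Finset.mem_filter, Finset.mem_range, List.prefix_iff_eq_take, eq_comm (a := w)]
    refine and_congr_left fun hi => ?_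
    have hlen : min w.length (x.length - i) = w.length := by simpa using congrArg List.length hi
    omega
  rw [hfilter]
  rfl

theorem eq_of_occ_le_one {w x : List Bool} {i j : ℕ} (h : occ w x ≤ 1)
    (hi : i ≤ x.length) (hwi : w <+: x.drop i) (hj : j ≤ x.length) (hwj : w <+: x.drop j) :
    i = j := by
  rw [occ_eq_card_filter_prefix_drop, Finset.card_le_one] at h
  exact h i (Finset.mem_filter.mpr ⟨Finset.mem_range_succ_iff.mpr hi, hwi⟩)
    j (Finset.mem_filter.mpr ⟨Finset.mem_range_succ_iff.mpr hj, hwj⟩)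

theorem modEq_of_occursAtSeq_omegaPow {v x : List Bool} {m p q : ℕ} (hx : x ≠ [])
    (hm : m ≤ x.length) (hv : v.length ≤ m + 1) (hocc : occ v (x ++ x.take m) ≤ 1)
    (hp : occursAtSeq v (omegaPow x) p) (hq : occursAtSeq v (omegaPow x) q) :
    p ≡ q [MOD x.length] := by
  have window (r : ℕ) (hr : occursAtSeq v (omegaPow x) r) :
      r % x.length ≤ (x ++ x.take m).length ∧ v <+: (x ++ x.take m).drop (r % x.length) := by
    have hlt : r % x.length < x.length := Nat.mod_lt r (List.length_pos_iff.mpr hx)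
    refine ⟨by rw [List.length_append]; omega, ?_⟩
    rwa [prefix_drop_append_take_iff_occursAtSeq hm hv hlt,
      occursAtSeq_mod_period_iff (omegaPow_periodic x)]
  exact eq_of_occ_le_one hocc (window p hp).1 (window p hp).2 (window q hq).1 (window q hq).2

theorem IsDeBruijn.ne_nil {n : ℕ} {x : List Bool} (hx : IsDeBruijn n x) : x ≠ [] :=
  List.ne_nil_of_length_pos (hx.1 ▸ Nat.two_pow_pos n)

theorem IsDeBruijn.le_length {n : ℕ} {x : List Bool} (hx : IsDeBruijn n x) : n ≤ x.length :=
  hx.1 ▸ Nat.lt_two_pow_self.le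

theorem stmt6_general (n : ℕ) (x : List Bool) (hx : x ≠ []) (hn : n ≤ x.length + 1)
    (hocc : ∀ v : List Bool, v.length = n → occ v (x ++ x.take (n - 1)) ≤ 1)
    (w : List Bool) (hw : n ≤ w.length) (p q : ℕ)
    (hp : occursAtSeq w (omegaPow x) p) (hq : occursAtSeq w (omegaPow x) q) :
    p % x.length = q % x.length ∧
      omegaPow x (p + w.length) = omegaPow x (q + w.length) := by
  have hlen : (w.take n).length = n := List.length_take_of_le hw
  have hmod : p ≡ q [MOD x.length] :=
    modEq_of_occursAtSeq_omegaPow (m := n - 1) hx (by omega) (by omega) (hocc _ hlen)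
      (hp.of_prefix (w.take_prefix n)) (hq.of_prefix (w.take_prefix n))
  exact ⟨hmod, omegaPow_congr (hmod.add_right _)⟩

/-- If `x` is a de Bruijn string of order `n` and `|w| ≥ n`, then any two occurrences of
`w` in the periodic sequence `x^ω` start at positions congruent mod `2^n`; consequently
every occurrence of `w` in `x^ω` is followed by the same bit. -/
theorem stmt6 (n : ℕ) (x : List Bool) (hx : IsDeBruijn n x) (w : List Bool)
    (hw : n ≤ w.length) (p q : ℕ)
    (hp : occursAtSeq w (fun i => x.getD (i % x.length) false) p)
    (hq : occursAtSeq w (fun i => x.getD (i % x.length) false) q) :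
    p % 2 ^ n = q % 2 ^ n ∧
      x.getD ((p + w.length) % x.length) false
        = x.getD ((q + w.length) % x.length) false := by
  rw [← hx.1]
  exact stmt6_general n x hx.ne_nil (hx.le_length.trans (Nat.le_succ _))
    (fun v hv => (hx.2 v hv).le) w hw p q hp hq
end
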